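/- Let q ∈ ℂ with 0 < |q| < 1 and let x ∈ ℂ with x ≠ 0. Then (1 - x) · q^{-1} Σ_{k ≥ 1} (xq;q)_{k-1} (q/x;q)_{k-1} q^{k} = (1/(q;q)_∞) · ( Σ_{r ≥ 0, n ≥ 0} - Σ_{r < 0, n < 0} ) (-1)^{n+r} x^{-r} q^{n(3n+5)/2 + 2nr + r(r+3)/2}, where all series converge absolutely. (The left side is (1-x)·U_1(-x;q).) -/

import Mathlib

open Finset

/-- The finite q-Pochhammer symbol `(a;q)_n`. -/
noncomputable def qPoch (q a : ℂ) (n : ℕ) : ℂ := ∏ j ∈ Finset.range n, (1 - a * q ^ j)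

/-- The infinite q-Pochhammer symbol `(a;q)_∞`. -/
noncomputable def qPochInf (q a : ℂ) : ℂ := ∏' j : ℕ, (1 - a * q ^ j)

/-- The Hecke-type summand `(-1)^{n+r} x^{-r} q^{n(3n+5)/2 + 2nr + r(r+3)/2}`,
indexed by the pair `(r, n)`. -/
noncomputable def hTerm (q x : ℂ) (p : ℤ × ℤ) : ℂ :=
  (-1 : ℂ) ^ (p.2 + p.1) * x ^ (-p.1) *
    q ^ (p.2 * (3 * p.2 + 5) / 2 + 2 * p.2 * p.1 + p.1 * (p.1 + 3) / 2)

/-!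
By MacMahon's finite form of the Jacobi triple product, `(x;q)_{k+1} (q/x;q)_k` is a sum over
`r + s = k` of theta terms in `x` times Gaussian binomials `[2r+2s+1, s]`. Summing against `q^k`
and exchanging the order of summation leaves, for each `r`, the series
`A(N) = Σ_s q^s [2s+N, s]` at `N = 2r+1`. Both `q`-Pascal rules together make
`A(N) + q^{N+3} A(N+3)` telescope to `1/(q;q)_∞`, and iterating this recurrence expands
`A(N)` as a partial theta series, which is the inner sum of the Hecke-type double sum.
-/

open Filter Topology

lemma tsum_sum_antidiagonal {A M : Type*} [AddCommMonoid A] [HasAntidiagonal A]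
    [AddCommMonoid M] [TopologicalSpace M] [ContinuousAdd M] [T3Space M] {f : A × A → M}
    (hf : Summable f) : ∑' n, ∑ p ∈ antidiagonal n, f p = ∑' p, f p :=
  ((HasAntidiagonal.sigmaAntidiagonalEquivProd.hasSum_iff.mpr hf.hasSum).sigma fun n ↦
    (antidiagonal n).hasSum f).tsum_eq

section Geometric

variable {𝕜 : Type*} [NormedDivisionRing 𝕜] {q : 𝕜}

lemma one_sub_mul_pow_ne_zero (hq : ‖q‖ < 1) (n : ℕ) : 1 - q * q ^ n ≠ 0 := by
  rw [← pow_succ', sub_ne_zero]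
  intro h
  have : ‖q ^ (n + 1)‖ < 1 := by
    rw [norm_pow]; exact pow_lt_one₀ (norm_nonneg q) hq n.succ_ne_zero
  rw [← h, norm_one] at this
  exact this.false

lemma summable_norm_neg_mul_pow (hq : ‖q‖ < 1) (a : 𝕜) :
    Summable fun n : ℕ ↦ ‖-(a * q ^ n)‖ := by
  simp only [norm_neg, norm_mul, norm_pow]
  exact (summable_geometric_of_lt_one (norm_nonneg q) hq).mul_left _

lemma norm_neg_one_pow_mul_pow_le (hq : ‖q‖ < 1) {m n : ℕ} (hmn : n ≤ m) :
    ‖(-1) ^ n * q ^ m‖ ≤ ‖q‖ ^ n := by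
  rw [norm_mul, norm_pow, norm_neg, norm_one, one_pow, one_mul, norm_pow]
  exact pow_le_pow_of_le_one (norm_nonneg q) hq.le hmn

end Geometric

section PartialTheta

lemma succ_choose_two (n : ℕ) : (n + 1).choose 2 = n.choose 2 + n := by
  rw [Nat.choose_succ_succ', Nat.choose_one_right, add_comm]

lemma le_three_mul_succ_choose_two_add (n m : ℕ) : n ≤ 3 * (n + 1).choose 2 + m := by
  have := succ_choose_two n
  lia

lemma eq_sum_add_of_eq_sub {R : Type*} [CommRing R] {q c : R} {f : ℕ → R}
    (hrec : ∀ N, f N = c - q ^ (N + 3) * f (N + 3)) (N m : ℕ) :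
    f N = ∑ n ∈ range m, c * ((-1) ^ n * q ^ (3 * (n + 1).choose 2 + n * N)) +
      (-1) ^ m * q ^ (3 * (m + 1).choose 2 + m * N) * f (N + 3 * m) := by
  induction m with
  | zero => simp
  | succ m ih =>
    rw [ih, sum_range_succ, add_assoc, hrec (N + 3 * m), succ_choose_two (m + 1)]
    congr 1
    ring_nf

lemma hasSum_partialTheta_of_eq_sub {𝕜 : Type*} [NormedField 𝕜] [CompleteSpace 𝕜] {q c : 𝕜}
    (hq : ‖q‖ < 1) {f : ℕ → 𝕜} {M : ℝ} (hf : ∀ N, ‖f N‖ ≤ M)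
    (hrec : ∀ N, f N = c - q ^ (N + 3) * f (N + 3)) (N : ℕ) :
    HasSum (fun n ↦ c * ((-1) ^ n * q ^ (3 * (n + 1).choose 2 + n * N))) (f N) := by
  have hle (n : ℕ) : ‖(-1) ^ n * q ^ (3 * (n + 1).choose 2 + n * N)‖ ≤ ‖q‖ ^ n :=
    norm_neg_one_pow_mul_pow_le hq (le_three_mul_succ_choose_two_add _ _)
  have hgeom := summable_geometric_of_lt_one (norm_nonneg q) hq
  have hremainder : Tendsto
      (fun m ↦ (-1) ^ m * q ^ (3 * (m + 1).choose 2 + m * N) * f (N + 3 * m)) atTop (𝓝 0) := by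
    refine squeeze_zero_norm (a := fun m ↦ ‖q‖ ^ m * M) (fun m ↦ ?_) ?_
    · rw [norm_mul]
      gcongr
      exacts [hle m, hf _]
    · simpa using (tendsto_pow_atTop_nhds_zero_of_lt_one (norm_nonneg q) hq).mul_const M
  have hsum : Summable fun n ↦ c * ((-1) ^ n * q ^ (3 * (n + 1).choose 2 + n * N)) :=
    (Summable.of_norm_bounded hgeom hle).mul_left c
  rw [hsum.hasSum_iff_tendsto_nat]
  have h := (tendsto_const_nhds (x := f N)).sub hremainder
  rw [sub_zero] at h
  exact h.congr fun m ↦ sub_eq_of_eq_add (eq_sum_add_of_eq_sub hrec N m)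

end PartialTheta

section qPoch

variable {q : ℂ}

lemma qPoch_zero (q a : ℂ) : qPoch q a 0 = 1 := prod_range_zero _

lemma qPoch_succ (q a : ℂ) (n : ℕ) : qPoch q a (n + 1) = qPoch q a n * (1 - a * q ^ n) :=
  prod_range_succ _ _

lemma qPoch_succ' (q a : ℂ) (n : ℕ) : qPoch q a (n + 1) = (1 - a) * qPoch q (a * q) n := by
  simp only [qPoch, prod_range_succ', pow_zero, mul_one, pow_succ', mul_assoc, mul_comm (1 - a)]

lemma qPoch_self_ne_zero (hq : ‖q‖ < 1) (n : ℕ) : qPoch q q n ≠ 0 :=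
  prod_ne_zero_iff.mpr fun j _ ↦ one_sub_mul_pow_ne_zero hq j

lemma tendsto_qPoch (hq : ‖q‖ < 1) (a : ℂ) : Tendsto (qPoch q a) atTop (𝓝 (qPochInf q a)) := by
  have h := (multipliable_one_add_of_summable (summable_norm_neg_mul_pow hq a)).hasProd
  simp only [← sub_eq_add_neg] at h
  exact h.tendsto_prod_nat

lemma qPochInf_self_ne_zero (hq : ‖q‖ < 1) : qPochInf q q ≠ 0 := by
  have h := tprod_one_add_ne_zero_of_summable (f := fun n : ℕ ↦ -(q * q ^ n))
    (fun n ↦ by simpa only [← sub_eq_add_neg] using one_sub_mul_pow_ne_zero hq n)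
    (summable_norm_neg_mul_pow hq q)
  simpa only [← sub_eq_add_neg, qPochInf] using h

lemma exists_norm_qPoch_le (hq : ‖q‖ < 1) (a : ℂ) : ∃ M, ∀ n, ‖qPoch q a n‖ ≤ M := by
  obtain ⟨M, hM⟩ := (tendsto_qPoch hq a).norm.bddAbove_range
  exact ⟨M, fun n ↦ hM ⟨n, rfl⟩⟩

lemma summable_norm_qPoch_mul_qPoch_mul_pow (hq : ‖q‖ < 1) (a b : ℂ) :
    Summable fun k : ℕ ↦ ‖qPoch q a k * qPoch q b k * q ^ (k + 1)‖ := by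
  obtain ⟨M, hM⟩ := exists_norm_qPoch_le hq a
  obtain ⟨M', hM'⟩ := exists_norm_qPoch_le hq b
  have hgeom : Summable fun k : ℕ ↦ ‖q‖ ^ (k + 1) :=
    (summable_nat_add_iff 1).mpr (summable_geometric_of_lt_one (norm_nonneg q) hq)
  refine Summable.of_nonneg_of_le (fun _ ↦ norm_nonneg _) (fun k ↦ ?_) (hgeom.mul_left (M * M'))
  rw [norm_mul, norm_mul, norm_pow]
  have hM0 : 0 ≤ M := (norm_nonneg _).trans (hM 0)
  gcongr
  exacts [hM k, hM' k]

end qPoch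

section qAddChoose

variable {q : ℂ}

/-- The Gaussian binomial coefficient `[m+n, m]`, the `q`-analogue of `(m + n).choose m`. Indexing
it by the two lower entries makes it symmetric and avoids truncated subtraction. -/
noncomputable def qAddChoose (q : ℂ) (m n : ℕ) : ℂ :=
  qPoch q q (m + n) / (qPoch q q m * qPoch q q n)

lemma qAddChoose_comm (q : ℂ) (m n : ℕ) : qAddChoose q m n = qAddChoose q n m := by
  rw [qAddChoose, qAddChoose, add_comm, mul_comm (qPoch q q m)]

lemma qAddChoose_zero_left (hq : ∀ n, qPoch q q n ≠ 0) (n : ℕ) : qAddChoose q 0 n = 1 := by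
  rw [qAddChoose, zero_add, qPoch_zero, one_mul, div_self (hq n)]

lemma qAddChoose_zero_right (hq : ∀ n, qPoch q q n ≠ 0) (n : ℕ) : qAddChoose q n 0 = 1 := by
  rw [qAddChoose_comm, qAddChoose_zero_left hq]

lemma qAddChoose_succ_succ (hq : ∀ n, qPoch q q n ≠ 0) (m n : ℕ) :
    qAddChoose q (m + 1) (n + 1) =
      qAddChoose q (m + 1) n + q ^ (n + 1) * qAddChoose q m (n + 1) := by
  have hm := hq (m + 1)
  have hn := hq (n + 1)
  rw [qPoch_succ] at hm hn
  obtain ⟨hm₀, hm₁⟩ := mul_ne_zero_iff.mp hm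
  obtain ⟨hn₀, hn₁⟩ := mul_ne_zero_iff.mp hn
  simp only [qAddChoose, show m + 1 + (n + 1) = m + n + 1 + 1 by ring,
    show m + 1 + n = m + n + 1 by ring, show m + (n + 1) = m + n + 1 by ring]
  rw [qPoch_succ q q (m + n + 1), qPoch_succ q q m, qPoch_succ q q n]
  field_simp
  ring

lemma qAddChoose_succ_succ' (hq : ∀ n, qPoch q q n ≠ 0) (m n : ℕ) :
    qAddChoose q (m + 1) (n + 1) =
      q ^ (m + 1) * qAddChoose q (m + 1) n + qAddChoose q m (n + 1) := by
  rw [qAddChoose_comm, qAddChoose_succ_succ hq, qAddChoose_comm q (n + 1) m,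
    qAddChoose_comm q n (m + 1), add_comm]

lemma sum_antidiagonal_succ_qAddChoose_mul (hq : ∀ n, qPoch q q n ≠ 0) (f : ℕ × ℕ → ℂ) (n : ℕ) :
    ∑ p ∈ antidiagonal (n + 1), qAddChoose q p.1 p.2 * f p =
      ∑ p ∈ antidiagonal n, qAddChoose q p.1 p.2 * f (p.1, p.2 + 1) +
        ∑ p ∈ antidiagonal n, q ^ p.2 * qAddChoose q p.1 p.2 * f (p.1 + 1, p.2) := by
  cases n with
  | zero =>
    simp [Nat.sum_antidiagonal_succ, qAddChoose_zero_left hq, qAddChoose_zero_right hq]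
  | succ n =>
    rw [Nat.sum_antidiagonal_succ, Nat.sum_antidiagonal_succ', Nat.sum_antidiagonal_succ,
      Nat.sum_antidiagonal_succ']
    simp only [qAddChoose_succ_succ hq, qAddChoose_zero_left hq, qAddChoose_zero_right hq,
      add_mul, sum_add_distrib, pow_zero, one_mul]
    ring

lemma sum_antidiagonal_succ_qAddChoose_mul' (hq : ∀ n, qPoch q q n ≠ 0) (f : ℕ × ℕ → ℂ) (n : ℕ) :
    ∑ p ∈ antidiagonal (n + 1), qAddChoose q p.1 p.2 * f p =
      ∑ p ∈ antidiagonal n, q ^ p.1 * qAddChoose q p.1 p.2 * f (p.1, p.2 + 1) +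
        ∑ p ∈ antidiagonal n, qAddChoose q p.1 p.2 * f (p.1 + 1, p.2) := by
  rw [← Nat.sum_antidiagonal_swap]
  simp only [Prod.fst_swap, Prod.snd_swap, qAddChoose_comm q (Prod.snd _)]
  rw [sum_antidiagonal_succ_qAddChoose_mul hq fun p ↦ f p.swap, add_comm]
  congr 1 <;> rw [← Nat.sum_antidiagonal_swap] <;>
    simp only [Prod.fst_swap, Prod.snd_swap, Prod.swap_prod_mk, qAddChoose_comm q (Prod.snd _)]

lemma tendsto_qAddChoose (hq : ‖q‖ < 1) {ι : Type*} {l : Filter ι} {f g : ι → ℕ}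
    (hf : Tendsto f l atTop) (hg : Tendsto g l atTop) :
    Tendsto (fun i ↦ qAddChoose q (f i) (g i)) l (𝓝 (1 / qPochInf q q)) := by
  have hP := qPochInf_self_ne_zero hq
  have h := tendsto_qPoch hq q
  rw [one_div, ← div_mul_cancel_left₀ hP (qPochInf q q)]
  exact (h.comp (hf.atTop_add_atTop hg)).div ((h.comp hf).mul (h.comp hg)) (mul_ne_zero hP hP)

lemma exists_norm_qAddChoose_le (hq : ‖q‖ < 1) : ∃ M, ∀ m n, ‖qAddChoose q m n‖ ≤ M := by
  obtain ⟨M, hM⟩ := exists_norm_qPoch_le hq q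
  obtain ⟨M', hM'⟩ := ((tendsto_qPoch hq q).inv₀ (qPochInf_self_ne_zero hq)).norm.bddAbove_range
  have hM' : ∀ n, ‖(qPoch q q n)⁻¹‖ ≤ M' := fun n ↦ hM' ⟨n, rfl⟩
  have hM0 : 0 ≤ M := (norm_nonneg _).trans (hM 0)
  have hM0' : 0 ≤ M' := (norm_nonneg _).trans (hM' 0)
  refine ⟨M * (M' * M'), fun m n ↦ ?_⟩
  rw [qAddChoose, div_eq_mul_inv, mul_inv, norm_mul, norm_mul]
  gcongr
  exacts [hM _, hM' m, hM' n]

end qAddChoose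

section CentralSeries

variable {q : ℂ}

lemma qAddChoose_diagonal_eq_sum_add_sum (hq : ∀ n, qPoch q q n ≠ 0) (N K : ℕ) :
    qAddChoose q (K + 1) (K + 1 + N + 1) =
      ∑ k ∈ range (K + 2), q ^ k * qAddChoose q k (k + N) +
        ∑ k ∈ range K, q ^ (k + N + 3) * qAddChoose q k (k + (N + 3)) := by
  induction K with
  | zero =>
    rw [qAddChoose_succ_succ' hq]
    simp only [sum_range_succ, sum_range_zero, qAddChoose_zero_left hq]
    ring
  | succ K ih =>
    have pascal : qAddChoose q (K + 2) (K + 2 + N + 1) =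
        qAddChoose q (K + 1) (K + 1 + N + 1) + q ^ (K + 2) * qAddChoose q (K + 2) (K + 2 + N) +
          q ^ (K + N + 3) * qAddChoose q K (K + (N + 3)) := by
      rw [qAddChoose_succ_succ' hq, show K + 2 + N + 1 = K + 1 + N + 1 + 1 by ring,
        qAddChoose_succ_succ hq, show K + 1 + N + 1 + 1 = K + (N + 3) by ring,
        show K + 2 + N = K + 1 + N + 1 by ring, show K + N + 3 = K + (N + 3) by ring]
      ring
    rw [sum_range_succ _ (K + 2), sum_range_succ _ K, pascal, ih]
    ring

/-- The series `A(N) = Σ_k q^k [2k+N, k]`, evaluated below through its recurrence in `N`. -/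
noncomputable def centralSeries (q : ℂ) (N : ℕ) : ℂ := ∑' k, q ^ k * qAddChoose q k (k + N)

lemma exists_norm_pow_mul_qAddChoose_le (hq : ‖q‖ < 1) :
    ∃ M, ∀ N k, ‖q ^ k * qAddChoose q k (k + N)‖ ≤ ‖q‖ ^ k * M := by
  obtain ⟨M, hM⟩ := exists_norm_qAddChoose_le hq
  refine ⟨M, fun N k ↦ ?_⟩
  rw [norm_mul, norm_pow]
  gcongr
  exact hM _ _

lemma hasSum_centralSeries (hq : ‖q‖ < 1) (N : ℕ) :
    HasSum (fun k ↦ q ^ k * qAddChoose q k (k + N)) (centralSeries q N) :=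
  have ⟨M, hM⟩ := exists_norm_pow_mul_qAddChoose_le hq
  have hgeom := (summable_geometric_of_lt_one (norm_nonneg q) hq).mul_right M
  (hgeom.of_norm_bounded (hM N)).hasSum

lemma exists_norm_centralSeries_le (hq : ‖q‖ < 1) : ∃ M, ∀ N, ‖centralSeries q N‖ ≤ M :=
  have ⟨M, hM⟩ := exists_norm_pow_mul_qAddChoose_le hq
  have hgeom := (hasSum_geometric_of_lt_one (norm_nonneg q) hq).mul_right M
  ⟨_, fun N ↦ tsum_of_norm_bounded hgeom (hM N)⟩

lemma centralSeries_eq_sub (hq : ‖q‖ < 1) (N : ℕ) :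
    centralSeries q N = 1 / qPochInf q q - q ^ (N + 3) * centralSeries q (N + 3) := by
  have hdiag : Tendsto (fun K ↦ qAddChoose q (K + 1) (K + 1 + N + 1)) atTop
      (𝓝 (1 / qPochInf q q)) :=
    tendsto_qAddChoose hq (tendsto_add_atTop_nat 1) <|
      tendsto_atTop_mono (fun K ↦ by lia) (tendsto_add_atTop_nat 1)
  have hN := (hasSum_centralSeries hq N).tendsto_sum_nat.comp (tendsto_add_atTop_nat 2)
  have hN3 := ((hasSum_centralSeries hq (N + 3)).mul_left (q ^ (N + 3))).tendsto_sum_nat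
  refine eq_sub_of_add_eq (tendsto_nhds_unique (hN.add hN3) (hdiag.congr fun K ↦ ?_))
  rw [qAddChoose_diagonal_eq_sum_add_sum (qPoch_self_ne_zero hq)]
  simp only [Function.comp_apply, ← mul_assoc, ← pow_add, add_comm, add_assoc, add_left_comm]

lemma hasSum_partialTheta_centralSeries (hq : ‖q‖ < 1) (N : ℕ) :
    HasSum (fun n ↦ 1 / qPochInf q q * ((-1) ^ n * q ^ (3 * (n + 1).choose 2 + n * N)))
      (centralSeries q N) :=
  have ⟨_, hM⟩ := exists_norm_centralSeries_le hq
  hasSum_partialTheta_of_eq_sub hq hM (centralSeries_eq_sub hq) N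

end CentralSeries

section Theta

variable {q x : ℂ}

/-- The summand `(-x)^r q^{r(r-1)/2}` of the theta series in Jacobi's triple product. -/
noncomputable def thetaTerm (q x : ℂ) (r : ℤ) : ℂ := (-x) ^ r * q ^ (r * (r - 1) / 2)

lemma thetaTerm_add_one (hq : q ≠ 0) (hx : x ≠ 0) (r : ℤ) :
    thetaTerm q x (r + 1) = -x * q ^ r * thetaTerm q x r := by
  have hexp : (r + 1) * (r + 1 - 1) / 2 = r + r * (r - 1) / 2 := by
    rw [show (r + 1) * (r + 1 - 1) = r * 2 + r * (r - 1) by ring,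
      Int.add_ediv_of_dvd_left ⟨r, mul_comm _ _⟩, Int.mul_ediv_cancel _ two_ne_zero]
  rw [thetaTerm, hexp, zpow_add₀ hq, zpow_add_one₀ (neg_ne_zero.mpr hx), thetaTerm]
  ring

lemma thetaTerm_neg (hq : q ≠ 0) (x : ℂ) (r : ℤ) :
    thetaTerm q x (-r) = thetaTerm q (q / x) r := by
  have hexp : -r * (-r - 1) / 2 = r + r * (r - 1) / 2 := by
    rw [show -r * (-r - 1) = r * 2 + r * (r - 1) by ring,
      Int.add_ediv_of_dvd_left ⟨r, mul_comm _ _⟩, Int.mul_ediv_cancel _ two_ne_zero]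
  rw [thetaTerm, thetaTerm, hexp, zpow_add₀ hq, ← mul_assoc, zpow_neg, ← inv_zpow, ← mul_zpow,
    inv_neg, neg_mul, ← neg_div, div_eq_mul_inv, neg_mul, mul_comm q]

lemma summable_thetaTerm_natCast (hq0 : q ≠ 0) (hq1 : ‖q‖ < 1) (hx : x ≠ 0) :
    Summable fun n : ℕ ↦ thetaTerm q x n := by
  have hratio : Tendsto (fun n : ℕ ↦ ‖x‖ * ‖q‖ ^ n) atTop (𝓝 0) := by
    simpa using (tendsto_pow_atTop_nhds_zero_of_lt_one (norm_nonneg q) hq1).const_mul ‖x‖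
  refine summable_of_ratio_norm_eventually_le one_half_lt_one ?_
  filter_upwards [hratio.eventually_le_const one_half_pos] with n hn
  rw [Nat.cast_succ, thetaTerm_add_one hq0 hx, norm_mul, norm_mul, norm_neg, norm_zpow,
    zpow_natCast]
  gcongr

lemma summable_norm_thetaTerm (hq0 : q ≠ 0) (hq1 : ‖q‖ < 1) (hx : x ≠ 0) :
    Summable fun r : ℤ ↦ ‖thetaTerm q x r‖ := by
  refine (Summable.of_nat_of_neg (summable_thetaTerm_natCast hq0 hq1 hx) ?_).norm
  simp only [thetaTerm_neg hq0]
  exact summable_thetaTerm_natCast hq0 hq1 (div_ne_zero hq0 hx)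

lemma qPoch_div_eq_sum_antidiagonal (hq0 : q ≠ 0) (hq : ∀ n, qPoch q q n ≠ 0) (hx : x ≠ 0)
    (n : ℕ) :
    qPoch q (q / x) n =
      ∑ p ∈ antidiagonal n, qAddChoose q p.1 p.2 * thetaTerm q x (p.1 - n) := by
  induction n with
  | zero => simp [qPoch_zero, qAddChoose_zero_left hq, thetaTerm]
  | succ n ih =>
    have hshift (r : ℤ) : thetaTerm q x (r - n) * (q / x * q ^ n) =
        -(q ^ r * thetaTerm q x (r - (n + 1))) := by
      have hstep := thetaTerm_add_one hq0 hx (r - (n + 1))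
      rw [sub_add_eq_sub_sub, sub_add_cancel] at hstep
      rw [hstep, ← sub_add_eq_sub_sub, zpow_sub₀ hq0, zpow_add_one₀ hq0, zpow_natCast]
      field_simp
    rw [sum_antidiagonal_succ_qAddChoose_mul' hq fun p ↦ thetaTerm q x (p.1 - (n + 1 : ℕ)),
      qPoch_succ, ih, mul_one_sub, sub_eq_neg_add, sum_mul, ← sum_neg_distrib]
    congr 1 <;> refine sum_congr rfl fun p _ ↦ ?_ <;> push_cast
    · rw [mul_assoc, hshift, zpow_natCast]
      ring
    · rw [add_sub_add_right_eq_sub]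

lemma qPoch_mul_qPoch_eq_sum_antidiagonal (hq0 : q ≠ 0) (hq : ∀ n, qPoch q q n ≠ 0)
    (hx : x ≠ 0) (m n : ℕ) :
    qPoch q x m * qPoch q (q / x) n =
      ∑ p ∈ antidiagonal (m + n), qAddChoose q p.1 p.2 * thetaTerm q x (p.1 - n) := by
  induction m with
  | zero => rw [qPoch_zero, one_mul, zero_add, qPoch_div_eq_sum_antidiagonal hq0 hq hx]
  | succ m ih =>
    rw [add_right_comm, sum_antidiagonal_succ_qAddChoose_mul hq fun p ↦ thetaTerm q x (p.1 - n),
      qPoch_succ, mul_right_comm, ih, mul_one_sub, sub_eq_add_neg, sum_mul, ← sum_neg_distrib]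
    congr 1
    refine sum_congr rfl fun p hp ↦ ?_
    have hpow : q ^ p.2 * q ^ ((p.1 : ℤ) - n) = q ^ m := by
      rw [← zpow_natCast, ← zpow_natCast, ← zpow_add₀ hq0]
      have := mem_antidiagonal.mp hp
      congr 1
      lia
    rw [Nat.cast_succ, add_sub_right_comm, thetaTerm_add_one hq0 hx, ← hpow]
    ring

lemma qPoch_succ_mul_qPoch_eq_sum_antidiagonal (hq0 : q ≠ 0) (hq : ∀ n, qPoch q q n ≠ 0)
    (hx : x ≠ 0) (k : ℕ) :
    qPoch q x (k + 1) * qPoch q (q / x) k =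
      ∑ p ∈ antidiagonal k, (thetaTerm q x (-p.1) + thetaTerm q x (p.1 + 1)) *
        qAddChoose q p.2 (p.2 + (2 * p.1 + 1)) := by
  -- The entries `k - r` and `k + 1 + r` are paired: their Gaussian binomials agree by symmetry.
  rw [qPoch_mul_qPoch_eq_sum_antidiagonal hq0 hq hx,
    Nat.sum_antidiagonal_eq_sum_range_succ_mk, Nat.sum_antidiagonal_eq_sum_range_succ_mk,
    show (k + 1 + k).succ = k + 1 + (k + 1) by lia, sum_range_add, ← sum_range_reflect,
    ← sum_add_distrib]
  refine sum_congr rfl fun r hr ↦ ?_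
  obtain ⟨s, rfl⟩ := Nat.exists_eq_add_of_le (mem_range_succ_iff.mp hr)
  have hlow : ((r + s + 1 - 1 - r : ℕ) : ℤ) - (r + s : ℕ) = -r := by lia
  have hhigh : ((r + s + 1 + r : ℕ) : ℤ) - (r + s : ℕ) = r + 1 := by lia
  rw [hlow, hhigh, show r + s + 1 - 1 - r = s by lia,
    show r + s + 1 + (r + s) - s = s + (2 * r + 1) by lia,
    show r + s + 1 + r = s + (2 * r + 1) by lia,
    show r + s + 1 + (r + s) - (s + (2 * r + 1)) = s by lia, show r + s - r = s by lia,
    qAddChoose_comm q (s + (2 * r + 1))]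
  ring

end Theta

section Hecke

variable {q : ℂ}

/-- The cofactor `(-1)^n q^{3n(n+1)/2 + n(2r+1) + r}` of `thetaTerm q x (-r)` in the Hecke-type
summand `hTerm q x (r, n)`; it does not involve `x`. -/
noncomputable def heckeFactor (q : ℂ) (r n : ℤ) : ℂ :=
  (-1) ^ n * q ^ (3 * (n * (n + 1) / 2) + n * (2 * r + 1) + r)

lemma hTerm_eq_thetaTerm_mul_heckeFactor (hq : q ≠ 0) (x : ℂ) (r n : ℤ) :
    hTerm q x (r, n) = thetaTerm q x (-r) * heckeFactor q r n := by
  have hexp : n * (3 * n + 5) / 2 + 2 * n * r + r * (r + 3) / 2 =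
      -r * (-r - 1) / 2 + (3 * (n * (n + 1) / 2) + n * (2 * r + 1) + r) := by
    obtain ⟨a, ha⟩ := (Int.even_mul_succ_self n).two_dvd
    obtain ⟨b, hb⟩ := (Int.even_mul_succ_self r).two_dvd
    rw [show n * (3 * n + 5) = 2 * (3 * a + n) by linear_combination 3 * ha,
      show r * (r + 3) = 2 * (b + r) by linear_combination hb,
      show -r * (-r - 1) = 2 * b by linear_combination hb, ha]
    simp only [Int.mul_ediv_cancel_left _ two_ne_zero]
    ring
  have hsign : (-1 : ℂ) ^ r = (-1) ^ (-r) := by rw [zpow_neg, ← inv_zpow, inv_neg_one]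
  rw [hTerm, thetaTerm, heckeFactor, hexp, zpow_add₀ hq, zpow_add₀ (neg_ne_zero.mpr one_ne_zero),
    hsign, neg_eq_neg_one_mul x, mul_zpow]
  ring

lemma heckeFactor_neg_sub_one (q : ℂ) (r n : ℤ) :
    heckeFactor q (-r - 1) (-n - 1) = -heckeFactor q r n := by
  have hsign : (-1 : ℂ) ^ (-n - 1) = -(-1) ^ n := by
    rw [zpow_sub_one₀ (neg_ne_zero.mpr one_ne_zero), zpow_neg, ← inv_zpow, inv_neg_one,
      mul_neg_one]
  rw [heckeFactor, heckeFactor, hsign, neg_mul,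
    show (-n - 1) * (-n - 1 + 1) = n * (n + 1) by ring]
  ring_nf

lemma heckeFactor_natCast (q : ℂ) (r n : ℕ) :
    heckeFactor q r n = (-1) ^ n * q ^ (3 * (n + 1).choose 2 + n * (2 * r + 1) + r) := by
  rw [heckeFactor, zpow_natCast, ← zpow_natCast q, Nat.choose_two_right, Nat.add_sub_cancel,
    mul_comm (n + 1)]
  push_cast
  rfl

lemma hasSum_heckeFactor (hq : ‖q‖ < 1) (r : ℕ) :
    HasSum (fun n : ℕ ↦ 1 / qPochInf q q * heckeFactor q r n)
      (q ^ r * centralSeries q (2 * r + 1)) := by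
  refine ((hasSum_partialTheta_centralSeries hq (2 * r + 1)).mul_left (q ^ r)).congr_fun ?_
  intro n
  rw [heckeFactor_natCast, pow_add]
  ring

lemma norm_heckeFactor_natCast_le (hq : ‖q‖ < 1) (r n : ℕ) : ‖heckeFactor q r n‖ ≤ ‖q‖ ^ n := by
  rw [heckeFactor_natCast, add_assoc]
  exact norm_neg_one_pow_mul_pow_le hq (le_three_mul_succ_choose_two_add _ _)

lemma summable_norm_mul_heckeFactor (hq : ‖q‖ < 1) {a : ℕ → ℂ} (ha : Summable fun r ↦ ‖a r‖) :
    Summable fun p : ℕ × ℕ ↦ ‖a p.1 * heckeFactor q p.1 p.2‖ := by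
  refine Summable.of_nonneg_of_le (fun _ ↦ norm_nonneg _) (fun p ↦ ?_)
    (ha.mul_of_nonneg (summable_geometric_of_lt_one (norm_nonneg q) hq)
      (fun _ ↦ norm_nonneg _) (fun _ ↦ by positivity))
  rw [norm_mul]
  gcongr
  exact norm_heckeFactor_natCast_le hq _ _

lemma tsum_mul_pow_mul_centralSeries (hq : ‖q‖ < 1) {a : ℕ → ℂ} (ha : Summable fun r ↦ ‖a r‖) :
    ∑' r, a r * (q ^ r * centralSeries q (2 * r + 1)) =
      1 / qPochInf q q * ∑' p : ℕ × ℕ, a p.1 * heckeFactor q p.1 p.2 := by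
  have h := (summable_norm_mul_heckeFactor hq ha).of_norm
  rw [h.tsum_prod, ← tsum_mul_left]
  refine tsum_congr fun r ↦ ?_
  simp only [← (hasSum_heckeFactor hq r).tsum_eq, tsum_mul_left]
  ring

lemma summable_pow_mul_mul_qAddChoose (hq : ‖q‖ < 1) {a : ℕ → ℂ} (ha : Summable fun r ↦ ‖a r‖) :
    Summable fun p : ℕ × ℕ ↦
      q ^ (p.1 + p.2) * (a p.1 * qAddChoose q p.2 (p.2 + (2 * p.1 + 1))) := by
  obtain ⟨M, hM⟩ := exists_norm_qAddChoose_le hq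
  refine Summable.of_norm_bounded ((ha.mul_of_nonneg
    (summable_geometric_of_lt_one (norm_nonneg q) hq) (fun _ ↦ norm_nonneg _)
    (fun _ ↦ by positivity)).mul_right M) fun p ↦ ?_
  have hpow : ‖q‖ ^ (p.1 + p.2) ≤ ‖q‖ ^ p.2 :=
    pow_le_pow_of_le_one (norm_nonneg q) hq.le (Nat.le_add_left _ _)
  calc ‖q ^ (p.1 + p.2) * (a p.1 * qAddChoose q p.2 (p.2 + (2 * p.1 + 1)))‖
      = ‖q‖ ^ (p.1 + p.2) * (‖a p.1‖ * ‖qAddChoose q p.2 (p.2 + (2 * p.1 + 1))‖) := by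
        rw [norm_mul, norm_mul, norm_pow]
    _ ≤ ‖q‖ ^ p.2 * (‖a p.1‖ * M) := by gcongr; exact hM _ _
    _ = ‖a p.1‖ * ‖q‖ ^ p.2 * M := by ring

lemma tsum_pow_mul_sum_antidiagonal_qAddChoose (hq : ‖q‖ < 1) {a : ℕ → ℂ}
    (ha : Summable fun r ↦ ‖a r‖) :
    ∑' k, q ^ k * ∑ p ∈ antidiagonal k, a p.1 * qAddChoose q p.2 (p.2 + (2 * p.1 + 1)) =
      ∑' r, a r * (q ^ r * centralSeries q (2 * r + 1)) := by
  have hsum := summable_pow_mul_mul_qAddChoose hq ha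
  calc ∑' k, q ^ k * ∑ p ∈ antidiagonal k, a p.1 * qAddChoose q p.2 (p.2 + (2 * p.1 + 1))
      = ∑' k, ∑ p ∈ antidiagonal k,
          q ^ (p.1 + p.2) * (a p.1 * qAddChoose q p.2 (p.2 + (2 * p.1 + 1))) := by
        refine tsum_congr fun k ↦ ?_
        rw [mul_sum]
        exact sum_congr rfl fun p hp ↦ by rw [← mem_antidiagonal.mp hp]
    _ = ∑' r, ∑' s, q ^ (r + s) * (a r * qAddChoose q s (s + (2 * r + 1))) := by
        rw [tsum_sum_antidiagonal hsum, hsum.tsum_prod]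
    _ = ∑' r, a r * (q ^ r * centralSeries q (2 * r + 1)) := by
        refine tsum_congr fun r ↦ ?_
        rw [centralSeries, ← tsum_mul_left, ← tsum_mul_left]
        exact tsum_congr fun s ↦ by ring

end Hecke

section Quadrants

variable {q x : ℂ}

/-- The quadrant `r, n ≥ 0` parametrised by `ℕ × ℕ`. -/
def nonnegQuadrantEquiv : ℕ × ℕ ≃ {p : ℤ × ℤ // 0 ≤ p.1 ∧ 0 ≤ p.2} where
  toFun p := ⟨(p.1, p.2), by simp⟩
  invFun p := (p.1.1.toNat, p.1.2.toNat)
  left_inv p := by simp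
  right_inv p := by ext <;> simp [p.2]

/-- The quadrant `r, n < 0` parametrised by `ℕ × ℕ` through `(r, n) ↦ (-r - 1, -n - 1)`. -/
def negQuadrantEquiv : ℕ × ℕ ≃ {p : ℤ × ℤ // p.1 < 0 ∧ p.2 < 0} where
  toFun p := ⟨(-p.1 - 1, -p.2 - 1), by constructor <;> simp only <;> lia⟩
  invFun p := ((-p.1.1 - 1).toNat, (-p.1.2 - 1).toNat)
  left_inv p := by simp
  right_inv p := by have := p.2; ext <;> simp <;> lia

lemma hTerm_nonnegQuadrantEquiv (hq : q ≠ 0) (x : ℂ) (p : ℕ × ℕ) :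
    hTerm q x (nonnegQuadrantEquiv p).1 = thetaTerm q x (-p.1) * heckeFactor q p.1 p.2 :=
  hTerm_eq_thetaTerm_mul_heckeFactor hq x p.1 p.2

lemma hTerm_negQuadrantEquiv (hq : q ≠ 0) (x : ℂ) (p : ℕ × ℕ) :
    hTerm q x (negQuadrantEquiv p).1 = -(thetaTerm q x (p.1 + 1) * heckeFactor q p.1 p.2) := by
  refine (hTerm_eq_thetaTerm_mul_heckeFactor hq x (-p.1 - 1) (-p.2 - 1)).trans ?_
  rw [heckeFactor_neg_sub_one, mul_neg, neg_sub_left, neg_neg, add_comm]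

lemma summable_norm_thetaTerm_neg_natCast (hq0 : q ≠ 0) (hq1 : ‖q‖ < 1) (hx : x ≠ 0) :
    Summable fun r : ℕ ↦ ‖thetaTerm q x (-r)‖ :=
  (summable_norm_thetaTerm hq0 hq1 hx).comp_injective
    (neg_injective.comp Nat.cast_injective)

lemma summable_norm_thetaTerm_natCast_add_one (hq0 : q ≠ 0) (hq1 : ‖q‖ < 1) (hx : x ≠ 0) :
    Summable fun r : ℕ ↦ ‖thetaTerm q x (r + 1)‖ :=
  (summable_norm_thetaTerm hq0 hq1 hx).comp_injective
    ((add_left_injective 1).comp Nat.cast_injective)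

lemma summable_norm_hTerm_nonneg (hq0 : q ≠ 0) (hq1 : ‖q‖ < 1) (hx : x ≠ 0) :
    Summable fun p : {p : ℤ × ℤ // 0 ≤ p.1 ∧ 0 ≤ p.2} ↦ ‖hTerm q x p.1‖ := by
  rw [← nonnegQuadrantEquiv.summable_iff]
  simp only [Function.comp_def, hTerm_nonnegQuadrantEquiv hq0]
  exact (summable_norm_mul_heckeFactor hq1 (summable_norm_thetaTerm_neg_natCast hq0 hq1 hx) :)

lemma summable_norm_hTerm_neg (hq0 : q ≠ 0) (hq1 : ‖q‖ < 1) (hx : x ≠ 0) :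
    Summable fun p : {p : ℤ × ℤ // p.1 < 0 ∧ p.2 < 0} ↦ ‖hTerm q x p.1‖ := by
  rw [← negQuadrantEquiv.summable_iff]
  simp only [Function.comp_def, hTerm_negQuadrantEquiv hq0, norm_neg]
  exact (summable_norm_mul_heckeFactor hq1 (summable_norm_thetaTerm_natCast_add_one hq0 hq1 hx) :)

lemma tsum_hTerm_nonneg_sub_tsum_hTerm_neg (hq0 : q ≠ 0) (hq1 : ‖q‖ < 1) (hx : x ≠ 0) :
    ∑' p : {p : ℤ × ℤ // 0 ≤ p.1 ∧ 0 ≤ p.2}, hTerm q x p.1 -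
        ∑' p : {p : ℤ × ℤ // p.1 < 0 ∧ p.2 < 0}, hTerm q x p.1 =
      ∑' p : ℕ × ℕ,
        (thetaTerm q x (-p.1) + thetaTerm q x (p.1 + 1)) * heckeFactor q p.1 p.2 := by
  have hpos := (summable_norm_mul_heckeFactor hq1
    (summable_norm_thetaTerm_neg_natCast hq0 hq1 hx)).of_norm
  have hneg := (summable_norm_mul_heckeFactor hq1
    (summable_norm_thetaTerm_natCast_add_one hq0 hq1 hx)).of_norm
  rw [← nonnegQuadrantEquiv.tsum_eq, ← negQuadrantEquiv.tsum_eq]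
  simp only [hTerm_nonnegQuadrantEquiv hq0, hTerm_negQuadrantEquiv hq0, tsum_neg, sub_neg_eq_add,
    add_mul]
  exact (hpos.tsum_add hneg).symm

lemma tsum_pow_mul_qPoch_succ_mul_qPoch (hq0 : q ≠ 0) (hq1 : ‖q‖ < 1) (hx : x ≠ 0) :
    ∑' k, q ^ k * (qPoch q x (k + 1) * qPoch q (q / x) k) =
      1 / qPochInf q q * ∑' p : ℕ × ℕ,
        (thetaTerm q x (-p.1) + thetaTerm q x (p.1 + 1)) * heckeFactor q p.1 p.2 := by
  have hθ : Summable fun r : ℕ ↦ ‖thetaTerm q x (-r) + thetaTerm q x (r + 1)‖ :=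
    ((summable_norm_thetaTerm_neg_natCast hq0 hq1 hx).add
      (summable_norm_thetaTerm_natCast_add_one hq0 hq1 hx)).of_nonneg_of_le
        (fun _ ↦ norm_nonneg _) (fun _ ↦ norm_add_le _ _)
  simp only [qPoch_succ_mul_qPoch_eq_sum_antidiagonal hq0 (qPoch_self_ne_zero hq1) hx]
  rw [tsum_pow_mul_sum_antidiagonal_qAddChoose hq1 hθ, tsum_mul_pow_mul_centralSeries hq1 hθ]

end Quadrants

/-- `(1-x)·U_1(-x;q)` as a Hecke-type double sum, with absolute
convergence of all series. -/
theorem stmt6 (q x : ℂ) (hq0 : 0 < ‖q‖) (hq1 : ‖q‖ < 1)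
    (hx : x ≠ 0) :
    Summable (fun k : ℕ =>
      ‖qPoch q (x * q) k * qPoch q (q / x) k * q ^ (k + 1)‖) ∧
    Summable (fun p : {p : ℤ × ℤ // 0 ≤ p.1 ∧ 0 ≤ p.2} => ‖hTerm q x p.1‖) ∧
    Summable (fun p : {p : ℤ × ℤ // p.1 < 0 ∧ p.2 < 0} => ‖hTerm q x p.1‖) ∧
    (1 - x) * q⁻¹ *
      ∑' k : ℕ, qPoch q (x * q) k * qPoch q (q / x) k * q ^ (k + 1) =
    (1 / qPochInf q q) *
      ((∑' p : {p : ℤ × ℤ // 0 ≤ p.1 ∧ 0 ≤ p.2}, hTerm q x p.1) -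
       (∑' p : {p : ℤ × ℤ // p.1 < 0 ∧ p.2 < 0}, hTerm q x p.1)) := by
  have hq : q ≠ 0 := norm_pos_iff.mp hq0
  refine ⟨summable_norm_qPoch_mul_qPoch_mul_pow hq1 _ _, summable_norm_hTerm_nonneg hq hq1 hx,
    summable_norm_hTerm_neg hq hq1 hx, ?_⟩
  rw [tsum_hTerm_nonneg_sub_tsum_hTerm_neg hq hq1 hx, ← tsum_pow_mul_qPoch_succ_mul_qPoch hq hq1 hx,
    ← tsum_mul_left]
  refine tsum_congr fun k ↦ ?_
  rw [qPoch_succ', pow_succ]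
  field_simp
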